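/- Let (X, ⊑) be a completely distributive complete lattice and let M, N be fuzzy intervals of X. Let M ∨̇ N denote the pointwise infimum of all fuzzy intervals A with M ≤ A and N ≤ A (the supremum of M and N among fuzzy intervals). Then for every p ∈ [0,1], the p-cut (M ∨̇ N)_p equals M_p ∪̇ N_p, the smallest closed interval of X containing both M_p and N_p (that is, the intersection of all closed intervals of X that contain both M_p and N_p). -/

import Mathlib

/-!
Each cut of a fuzzy interval above `M` and `N` is a closed interval containing the corresponding
cuts of `M` and `N`, which gives `⊇`. For `⊆` it suffices that the closed intervals
`H p = M_p ∪̇ N_p` are the cuts of some fuzzy set, that is, `⋂ q < p, H q = H p`. If some `M_q` with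
`q < p` is empty, then `H` agrees with the cuts of `N` between `q` and `p`, and symmetrically.
Otherwise `M_q = [a q, b q]` and `N_q = [c q, d q]` with `a`, `c` increasing and `b`, `d` decreasing
in `q`, and the claim becomes `⨆ q < p, a q ⊓ c q = (⨆ q < p, a q) ⊓ ⨆ q < p, c q` together with its
dual; as all families are directed, this is meet-continuity and join-continuity of `X`.
-/

/- The membership grade lattice `L = [0,1]`. -/
instance : Fact ((0:ℝ) ≤ 1) := ⟨zero_le_one⟩

/-- A subset `S` of a lattice `X` is a closed interval iff it is empty or
of the form `[a, b] = {z : a ⊑ z ⊑ b}` for some `a b : X`. -/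
def IsClosedInterval {X : Type*} [Lattice X] (S : Set X) : Prop :=
  S = ∅ ∨ ∃ a b : X, S = Set.Icc a b

/-- The `p`-cut of a fuzzy set `M : X → [0,1]` is `{x : M x ≥ p}`. -/
def cut {X : Type*} (M : X → unitInterval) (p : unitInterval) : Set X :=
  {x | p ≤ M x}

/-- A fuzzy set `M : X → [0,1]` is a fuzzy interval iff every `p`-cut
of `M` is a closed interval of `X`. -/
def IsFuzzyInterval {X : Type*} [Lattice X] (M : X → unitInterval) : Prop :=
  ∀ p : unitInterval, IsClosedInterval (cut M p)

/-- `M ∨̇ N`: the pointwise infimum of all fuzzy intervals dominating both `M` and `N`. -/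
noncomputable def fuzzySup {X : Type*} [Lattice X] (M N : X → unitInterval) :
    X → unitInterval :=
  fun x => ⨅ A ∈ {A : X → unitInterval | IsFuzzyInterval A ∧ M ≤ A ∧ N ≤ A}, A x

section ClosedIntervals

variable {X ι : Type*}

theorem IsClosedInterval.exists_eq_Icc [Lattice X] {S : Set X} (hS : IsClosedInterval S)
    (hne : S.Nonempty) : ∃ a b, a ≤ b ∧ S = Set.Icc a b := by
  rcases hS with rfl | ⟨a, b, rfl⟩
  · exact absurd hne Set.not_nonempty_empty
  · exact ⟨a, b, Set.nonempty_Icc.1 hne, rfl⟩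

theorem exists_monotone_antitone_eq_Icc [Lattice X] [Preorder ι] {S : ι → Set X}
    (hS : Antitone S) (hSI : ∀ i, IsClosedInterval (S i)) (hne : ∀ i, (S i).Nonempty) :
    ∃ a b : ι → X, Monotone a ∧ Antitone b ∧ a ≤ b ∧ S = fun i => Set.Icc (a i) (b i) := by
  choose a b hab hSab using fun i => (hSI i).exists_eq_Icc (hne i)
  obtain rfl : S = fun i => Set.Icc (a i) (b i) := funext hSab
  have hle {i j : ι} (hij : i ≤ j) := (Set.Icc_subset_Icc_iff (hab j)).1 (hS hij)
  exact ⟨a, b, fun _ _ hij => (hle hij).1, fun _ _ hij => (hle hij).2, hab, rfl⟩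

variable [CompleteLattice X]

theorem iInter_Icc_eq_Icc (a b : ι → X) :
    ⋂ i, Set.Icc (a i) (b i) = Set.Icc (⨆ i, a i) (⨅ i, b i) := by
  ext x
  simp only [Set.mem_iInter, Set.mem_Icc, iSup_le_iff, le_iInf_iff, forall_and]

theorem IsClosedInterval.iInter {S : ι → Set X} (hS : ∀ i, IsClosedInterval (S i)) :
    IsClosedInterval (⋂ i, S i) := by
  refine (Set.eq_empty_or_nonempty (⋂ i, S i)).imp id fun hne => ?_
  choose a b _ hab using fun i => (hS i).exists_eq_Icc (hne.mono (Set.iInter_subset S i))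
  exact ⟨⨆ i, a i, ⨅ i, b i, by simp only [hab, iInter_Icc_eq_Icc]⟩

theorem IsClosedInterval.sInter {F : Set (Set X)} (hF : ∀ S ∈ F, IsClosedInterval S) :
    IsClosedInterval (⋂₀ F) := by
  rw [Set.sInter_eq_iInter]
  exact .iInter fun S => hF S S.2

/-- The smallest closed interval containing a set. The paper's `A ∪̇ B` is
`closedIntervalHull (A ∪ B)`. -/
def closedIntervalHull : ClosureOperator (Set X) :=
  .ofCompletePred IsClosedInterval fun _ => IsClosedInterval.sInter

theorem isClosedInterval_closedIntervalHull (S : Set X) :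
    IsClosedInterval (closedIntervalHull S) :=
  closedIntervalHull.isClosed_closure S

theorem closedIntervalHull_subset {S T : Set X} (hST : S ⊆ T) (hT : IsClosedInterval T) :
    closedIntervalHull S ⊆ T :=
  closedIntervalHull.closure_min hST hT

theorem IsClosedInterval.closedIntervalHull_eq {S : Set X} (hS : IsClosedInterval S) :
    closedIntervalHull S = S :=
  (closedIntervalHull_subset subset_rfl hS).antisymm (closedIntervalHull.le_closure S)

theorem closedIntervalHull_union_eq_sInter (S T : Set X) :
    closedIntervalHull (S ∪ T) = ⋂₀ {I | IsClosedInterval I ∧ S ⊆ I ∧ T ⊆ I} := by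
  refine (Set.subset_sInter ?_).antisymm (Set.sInter_subset_of_mem ?_)
  · rintro I ⟨hI, hS, hT⟩
    exact closedIntervalHull_subset (Set.union_subset hS hT) hI
  · exact ⟨isClosedInterval_closedIntervalHull _,
      Set.union_subset_iff.1 (closedIntervalHull.le_closure (S ∪ T))⟩

theorem closedIntervalHull_Icc_union_Icc {a b c d : X} (hab : a ≤ b) (hcd : c ≤ d) :
    closedIntervalHull (Set.Icc a b ∪ Set.Icc c d) = Set.Icc (a ⊓ c) (b ⊔ d) := by
  refine Set.Subset.antisymm (closedIntervalHull_subset (Set.union_subset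
    (Set.Icc_subset_Icc inf_le_left le_sup_left) (Set.Icc_subset_Icc inf_le_right le_sup_right))
    (.inr ⟨_, _, rfl⟩)) ?_
  rw [closedIntervalHull_union_eq_sInter]
  rintro x ⟨hx₁, hx₂⟩ I ⟨rfl | ⟨s, t, rfl⟩, hS, hT⟩
  · exact (hS (Set.left_mem_Icc.2 hab)).elim
  · obtain ⟨hsa, hbt⟩ := (Set.Icc_subset_Icc_iff hab).1 hS
    obtain ⟨hsc, hdt⟩ := (Set.Icc_subset_Icc_iff hcd).1 hT
    exact ⟨(le_inf hsa hsc).trans hx₁, hx₂.trans (sup_le hbt hdt)⟩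

end ClosedIntervals

/-- A complete lattice is meet-continuous if binary meets distribute over directed joins.
Join-continuity of `X`, the dual notion, is expressed as `IsMeetContinuous Xᵒᵈ`. -/
def IsMeetContinuous (X : Type*) [CompleteLattice X] : Prop :=
  ∀ (x : X) (Y : Set X), DirectedOn (· ≤ ·) Y → x ⊓ sSup Y = ⨆ y ∈ Y, x ⊓ y

section MeetContinuous

variable {X ι : Type*} [CompleteLattice X] [Preorder ι] [IsDirectedOrder ι]

theorem IsMeetContinuous.inf_iSup_eq (hX : IsMeetContinuous X) (x : X) {f : ι → X}
    (hf : Monotone f) : x ⊓ ⨆ i, f i = ⨆ i, x ⊓ f i := by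
  rw [iSup, hX x _ hf.directed_le.directedOn_range, iSup_range]

theorem IsMeetContinuous.iSup_inf_iSup_of_monotone (hX : IsMeetContinuous X) {f g : ι → X}
    (hf : Monotone f) (hg : Monotone g) : (⨆ i, f i) ⊓ ⨆ i, g i = ⨆ i, f i ⊓ g i := by
  refine le_antisymm ?_ (le_inf (iSup_mono fun _ => inf_le_left) (iSup_mono fun _ => inf_le_right))
  rw [hX.inf_iSup_eq _ hg]
  refine iSup_le fun j => ?_
  rw [inf_comm, hX.inf_iSup_eq _ hf]
  refine iSup_le fun i => ?_
  obtain ⟨k, hik, hjk⟩ := exists_ge_ge i j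
  exact le_iSup_of_le k (inf_comm (g j) (f i) ▸ inf_le_inf (hf hik) (hg hjk))

theorem iInter_closedIntervalHull_Icc_union_Icc (hX : IsMeetContinuous X)
    (hXd : IsMeetContinuous Xᵒᵈ) {a b c d : ι → X} (ha : Monotone a) (hb : Antitone b)
    (hc : Monotone c) (hd : Antitone d) (hab : a ≤ b) (hcd : c ≤ d) :
    ⋂ i, closedIntervalHull (Set.Icc (a i) (b i) ∪ Set.Icc (c i) (d i)) =
      closedIntervalHull ((⋂ i, Set.Icc (a i) (b i)) ∪ ⋂ i, Set.Icc (c i) (d i)) := by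
  have hab' : ⨆ i, a i ≤ ⨅ i, b i :=
    iSup_le fun i => le_iInf fun j => ha.forall_le_of_antitone hb hab i j
  have hcd' : ⨆ i, c i ≤ ⨅ i, d i :=
    iSup_le fun i => le_iInf fun j => hc.forall_le_of_antitone hd hcd i j
  have hlower : (⨆ i, a i) ⊓ ⨆ i, c i = ⨆ i, a i ⊓ c i := hX.iSup_inf_iSup_of_monotone ha hc
  have hupper : (⨅ i, b i) ⊔ ⨅ i, d i = ⨅ i, b i ⊔ d i :=
    hXd.iSup_inf_iSup_of_monotone hb.dual_right hd.dual_right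
  simp only [closedIntervalHull_Icc_union_Icc (hab _) (hcd _), iInter_Icc_eq_Icc,
    closedIntervalHull_Icc_union_Icc hab' hcd', hlower, hupper]

theorem iInter_closedIntervalHull_union_subset_of_eq_empty {S T : ι → Set X} (hS : Antitone S)
    (hT : Antitone T) (hTI : ∀ i, IsClosedInterval (T i)) {i₀ : ι} (hi₀ : S i₀ = ∅) :
    ⋂ i, closedIntervalHull (S i ∪ T i) ⊆ ⋂ i, T i := by
  refine fun x hx => Set.mem_iInter.2 fun i => ?_
  obtain ⟨k, hik, hi₀k⟩ := exists_ge_ge i i₀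
  have hSk : S k = ∅ := Set.subset_eq_empty (hS hi₀k) hi₀
  have hxk : x ∈ closedIntervalHull (S k ∪ T k) := Set.mem_iInter.1 hx k
  rw [hSk, Set.empty_union, (hTI k).closedIntervalHull_eq] at hxk
  exact hT hik hxk

theorem iInter_closedIntervalHull_union (hX : IsMeetContinuous X) (hXd : IsMeetContinuous Xᵒᵈ)
    {S T : ι → Set X} (hS : Antitone S) (hT : Antitone T) (hSI : ∀ i, IsClosedInterval (S i))
    (hTI : ∀ i, IsClosedInterval (T i)) :
    ⋂ i, closedIntervalHull (S i ∪ T i) = closedIntervalHull ((⋂ i, S i) ∪ ⋂ i, T i) := by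
  have hsub : closedIntervalHull ((⋂ i, S i) ∪ ⋂ i, T i) ⊆ ⋂ i, closedIntervalHull (S i ∪ T i) :=
    Set.subset_iInter fun i => closedIntervalHull.monotone
      (Set.union_subset_union (Set.iInter_subset S i) (Set.iInter_subset T i))
  obtain ⟨hS_hull, hT_hull⟩ :=
    Set.union_subset_iff.1 (closedIntervalHull.le_closure ((⋂ i, S i) ∪ ⋂ i, T i))
  by_cases hSne : ∀ i, (S i).Nonempty
  · by_cases hTne : ∀ i, (T i).Nonempty
    · obtain ⟨a, b, ha, hb, hab, rfl⟩ := exists_monotone_antitone_eq_Icc hS hSI hSne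
      obtain ⟨c, d, hc, hd, hcd, rfl⟩ := exists_monotone_antitone_eq_Icc hT hTI hTne
      exact iInter_closedIntervalHull_Icc_union_Icc hX hXd ha hb hc hd hab hcd
    · obtain ⟨i₀, hi₀⟩ := not_forall.1 hTne
      simp only [Set.union_comm (S _)] at hsub ⊢
      exact ((iInter_closedIntervalHull_union_subset_of_eq_empty hT hS hSI
        (Set.not_nonempty_iff_eq_empty.1 hi₀)).trans hS_hull).antisymm hsub
  · obtain ⟨i₀, hi₀⟩ := not_forall.1 hSne
    exact ((iInter_closedIntervalHull_union_subset_of_eq_empty hS hT hTI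
      (Set.not_nonempty_iff_eq_empty.1 hi₀)).trans hT_hull).antisymm hsub

end MeetContinuous

section Cuts

variable {X : Type*}

theorem mem_cut {M : X → unitInterval} {p : unitInterval} {x : X} : x ∈ cut M p ↔ p ≤ M x :=
  Iff.rfl

theorem cut_antitone (M : X → unitInterval) : Antitone (cut M) :=
  fun _ _ hpq _ hx => hpq.trans hx

theorem cut_subset_cut {M N : X → unitInterval} (hMN : M ≤ N) (p : unitInterval) :
    cut M p ⊆ cut N p :=
  fun x hx => le_trans hx (hMN x)

theorem le_of_forall_cut_subset_cut {M N : X → unitInterval} (h : ∀ p, cut M p ⊆ cut N p) :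
    M ≤ N :=
  fun x => h (M x) (le_refl (M x))

theorem iInter_Iio_cut (M : X → unitInterval) (p : unitInterval) :
    ⋂ q : Set.Iio p, cut M q = cut M p := by
  refine Set.Subset.antisymm (fun x hx => ?_)
    (Set.subset_iInter fun q => cut_antitone M (le_of_lt q.2))
  exact le_of_forall_lt_imp_le_of_dense fun q hq => Set.mem_iInter.1 hx ⟨q, hq⟩

-- At `p = 0` the index set is empty, so `hH` says `H 0 = Set.univ`, as it must for a cut.
theorem exists_forall_cut_eq {H : unitInterval → Set X}
    (hH : ∀ p, ⋂ q : Set.Iio p, H q = H p) : ∃ A : X → unitInterval, ∀ p, cut A p = H p := by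
  refine ⟨fun x => sSup {q | x ∈ H q}, fun p => Set.Subset.antisymm (fun x hx => ?_)
    fun x hx => le_sSup (α := unitInterval) hx⟩
  rw [← hH p]
  refine Set.mem_iInter.2 fun q => ?_
  obtain ⟨r, hxr, hqr⟩ := lt_sSup_iff.1 (lt_of_lt_of_le q.2 (mem_cut.1 hx))
  rw [Set.mem_ofPred_eq, ← hH r] at hxr
  exact Set.mem_iInter.1 hxr ⟨q, hqr⟩

theorem fuzzySup_le [Lattice X] {M N A : X → unitInterval} (hA : IsFuzzyInterval A)
    (hMA : M ≤ A) (hNA : N ≤ A) : fuzzySup M N ≤ A :=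
  fun x => iInf₂_le (f := fun (B : X → unitInterval) _ => B x) A ⟨hA, hMA, hNA⟩

theorem closedIntervalHull_subset_cut_fuzzySup [CompleteLattice X] (M N : X → unitInterval)
    (p : unitInterval) : closedIntervalHull (cut M p ∪ cut N p) ⊆ cut (fuzzySup M N) p :=
  fun _ hx => mem_cut.2 <| le_iInf₂ fun _ ⟨hA, hMA, hNA⟩ =>
    closedIntervalHull_subset (Set.union_subset (cut_subset_cut hMA p) (cut_subset_cut hNA p))
      (hA p) hx

theorem iInter_Iio_closedIntervalHull_cut_union_cut [CompleteLattice X] (hX : IsMeetContinuous X)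
    (hXd : IsMeetContinuous Xᵒᵈ) {M N : X → unitInterval} (hM : IsFuzzyInterval M)
    (hN : IsFuzzyInterval N) (p : unitInterval) :
    ⋂ q : Set.Iio p, closedIntervalHull (cut M q ∪ cut N q) =
      closedIntervalHull (cut M p ∪ cut N p) := by
  have hanti (K : X → unitInterval) : Antitone fun q : Set.Iio p => cut K q :=
    (cut_antitone K).comp_monotone (Subtype.mono_coe _)
  rw [iInter_closedIntervalHull_union hX hXd (hanti M) (hanti N) (fun q => hM q) (fun q => hN q),
    iInter_Iio_cut, iInter_Iio_cut]

end Cuts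

theorem cut_fuzzySup_general {X : Type*} [CompleteLattice X] (hX : IsMeetContinuous X)
    (hXd : IsMeetContinuous Xᵒᵈ) {M N : X → unitInterval} (hM : IsFuzzyInterval M)
    (hN : IsFuzzyInterval N) (p : unitInterval) :
    cut (fuzzySup M N) p =
      ⋂₀ {S : Set X | IsClosedInterval S ∧ cut M p ⊆ S ∧ cut N p ⊆ S} := by
  rw [← closedIntervalHull_union_eq_sInter]
  obtain ⟨A, hA⟩ := exists_forall_cut_eq (H := fun q => closedIntervalHull (cut M q ∪ cut N q))
    (iInter_Iio_closedIntervalHull_cut_union_cut hX hXd hM hN)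
  have hAI : IsFuzzyInterval A := fun q => hA q ▸ isClosedInterval_closedIntervalHull _
  have hsub (q : unitInterval) : cut M q ∪ cut N q ⊆ cut A q :=
    hA q ▸ closedIntervalHull.le_closure _
  have hMA : M ≤ A := le_of_forall_cut_subset_cut fun q => Set.subset_union_left.trans (hsub q)
  have hNA : N ≤ A := le_of_forall_cut_subset_cut fun q => Set.subset_union_right.trans (hsub q)
  refine Set.Subset.antisymm ?_ (closedIntervalHull_subset_cut_fuzzySup M N p)
  exact (cut_subset_cut (fuzzySup_le hAI hMA hNA) p).trans (hA p).subset

/-- For fuzzy intervals `M, N` of a completely distributive complete lattice, the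
`p`-cut of `M ∨̇ N` is the smallest closed interval containing `M_p` and `N_p`,
i.e. the intersection of all closed intervals containing both. -/
theorem cut_fuzzySup {X : Type*} [CompleteLattice X]
    (hd1 : ∀ (x : X) (Y : Set X), x ⊔ sInf Y = ⨅ y ∈ Y, x ⊔ y)
    (hd2 : ∀ (x : X) (Y : Set X), x ⊓ sSup Y = ⨆ y ∈ Y, x ⊓ y)
    (M N : X → unitInterval) (hM : IsFuzzyInterval M) (hN : IsFuzzyInterval N)
    (p : unitInterval) :
    cut (fuzzySup M N) p =
      ⋂₀ {S : Set X | IsClosedInterval S ∧ cut M p ⊆ S ∧ cut N p ⊆ S} :=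
  cut_fuzzySup_general (fun x Y _ => hd2 x Y) (fun x Y _ => hd1 x Y) hM hN p
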